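/- arXiv:1402.4444 — 2 statements merged into one kernel-verified Lean document; each statement's English description precedes it below -/
import Mathlib

section
/- Let N = 2n with n ≥ 1 and let P be a polynomial function on N×N real matrices which, restricted to skew-symmetric matrices, is invariant under SO(N): P(A M Aᵀ) = P(M) for every skew-symmetric real N×N matrix M and every real N×N matrix A with AᵀA = I and det A = 1. Then there exists a real polynomial Q in n+1 variables such that for every skew-symmetric M, P(M) = Q(tr(M²), tr(M⁴), …, tr(M^{2n}), Pf(M)); that is, every SO(2n)-invariant of a skew-symmetric matrix is a polynomial in the traces of its even powers and its Pfaffian. -/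
/-!
Every skew-symmetric matrix of size `2n` is conjugate under `SO(2n)` to a block diagonal matrix
`skewBlocks x` with blocks `!![0, x i; -x i, 0]`, so an invariant is determined by its restriction
to these matrices, a polynomial `p` in `x`. The normal form comes from the eigenvectors of the
symmetric operator `M²`, two orthonormal vectors at a time (`exists_skew_pair`,
`exists_skew_family`); a wrong sign of the determinant is absorbed by the sign of one `x i`.

Permutations of the blocks and even numbers of sign changes are realized by conjugations in
`SO(2n)`, so `p` is invariant under the Weyl group of type `D`. Sign invariance makes all exponents
in a monomial of `p` have the same parity, hence `p = g(x²) + (∏ x i) h(x²)` with `g` and `h`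
symmetric; these are polynomials in power sums by the fundamental theorem on symmetric polynomials
and Newton's identities (`exists_weyl_invariant`).

The power sums of the `x i ^ 2` are the traces of the even powers of `skewBlocks x` up to nonzero
constants. The Pfaffian transforms by `Pf (A M Aᵀ) = det A * Pf M` (`Pf_conj`), which gives its
`SO(2n)`-invariance and also, as `skewBlocks x` is a conjugate of `skewBlocks 1` by a diagonal
matrix of determinant `∏ x i`, the formula `Pf (skewBlocks x) = c * ∏ x i`. Here only `c ≠ 0` is
needed, which holds since all terms in the sum defining the Pfaffian of `skewBlocks 1` are
nonnegative and one of them is positive.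
-/

noncomputable section

open Matrix

/-- The Pfaffian of a `2n × 2n` real matrix:
`Pf M = (1/(2^n n!)) Σ_{σ ∈ S_{2n}} sgn σ ∏_{i=1}^{n} M_{σ(2i-1) σ(2i)}`. -/
def Pf (n : ℕ) (M : Matrix (Fin (2 * n)) (Fin (2 * n)) ℝ) : ℝ :=
  (1 / (2 ^ n * (n.factorial : ℝ))) *
    ∑ σ : Equiv.Perm (Fin (2 * n)),
      ((Equiv.Perm.sign σ : ℤ) : ℝ) *
        ∏ i : Fin n, M (σ ⟨2 * i.1, by omega⟩) (σ ⟨2 * i.1 + 1, by omega⟩)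

/-! ### Block diagonal skew matrices and the Pfaffian -/

/-- The block diagonal skew matrix with blocks `!![0, x i; -x i, 0]`.
Index `(0, i)`, `(1, i)` are the two indices of the `i`-th block. -/
def skewBlocks {n : ℕ} {R : Type*} [CommRing R] (x : Fin n → R) :
    Matrix (Fin 2 × Fin n) (Fin 2 × Fin n) R :=
  blockDiagonal fun i => !![0, x i; -x i, 0]

/-- The pairing of indices used by `Pf`: `(j, i) ↦ 2 * i + j`. -/
def pairEquiv (n : ℕ) : Fin 2 × Fin n ≃ Fin (2 * n) :=
  (Equiv.prodComm _ _).trans (finProdFinEquiv.trans (finCongr (mul_comm n 2)))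

lemma pairEquiv_zero {n : ℕ} (i : Fin n) : pairEquiv n (0, i) = ⟨2 * i.1, by omega⟩ := by
  ext; simp [pairEquiv]

lemma pairEquiv_one {n : ℕ} (i : Fin n) : pairEquiv n (1, i) = ⟨2 * i.1 + 1, by omega⟩ := by
  ext; simp [pairEquiv]; omega

/-- The product `∏ i, u_{0,i}ᵀ N u_{1,i}`, as a multilinear function of the rows `u`; its
alternatization is the unnormalized Pfaffian of `u N uᵀ`. -/
def pairForm {n : ℕ} (N : Matrix (Fin 2 × Fin n) (Fin 2 × Fin n) ℝ) :
    MultilinearMap ℝ (fun _ : Fin 2 × Fin n => (Fin 2 × Fin n → ℝ)) ℝ :=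
  MultilinearMap.mk' (fun u => ∏ i, u (0, i) ⬝ᵥ N *ᵥ u (1, i))
    (by
      rintro u ⟨a, k⟩ x y
      rw [← Finset.mul_prod_erase _ _ (Finset.mem_univ k),
        ← Finset.mul_prod_erase _ _ (Finset.mem_univ k),
        ← Finset.mul_prod_erase _ _ (Finset.mem_univ k)]
      have h : ∀ z, ∏ i ∈ Finset.univ.erase k, (Function.update u (a, k) z (0, i) ⬝ᵥ
          N *ᵥ Function.update u (a, k) z (1, i)) =
          ∏ i ∈ Finset.univ.erase k, (u (0, i) ⬝ᵥ N *ᵥ u (1, i)) := by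
        intro z
        refine Finset.prod_congr rfl fun i hi => ?_
        have : i ≠ k := Finset.ne_of_mem_erase hi
        rw [Function.update_of_ne (by simp [this]), Function.update_of_ne (by simp [this])]
      simp only [h, ← add_mul]
      fin_cases a <;>
        simp [Function.update_of_ne, add_dotProduct, mulVec_add, dotProduct_add])
    (by
      rintro u ⟨a, k⟩ c x
      rw [← Finset.mul_prod_erase _ _ (Finset.mem_univ k),
        ← Finset.mul_prod_erase _ _ (Finset.mem_univ k)]
      have h : ∀ z, ∏ i ∈ Finset.univ.erase k, (Function.update u (a, k) z (0, i) ⬝ᵥ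
          N *ᵥ Function.update u (a, k) z (1, i)) =
          ∏ i ∈ Finset.univ.erase k, (u (0, i) ⬝ᵥ N *ᵥ u (1, i)) := by
        intro z
        refine Finset.prod_congr rfl fun i hi => ?_
        have : i ≠ k := Finset.ne_of_mem_erase hi
        rw [Function.update_of_ne (by simp [this]), Function.update_of_ne (by simp [this])]
      simp only [h, smul_eq_mul, ← mul_assoc]
      fin_cases a <;>
        simp [Function.update_of_ne, mulVec_smul])

/-- The Pfaffian without its normalizing factor, on the index set `Fin 2 × Fin n`. -/
def pfSum {n : ℕ} (N : Matrix (Fin 2 × Fin n) (Fin 2 × Fin n) ℝ) : ℝ :=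
  ∑ σ : Equiv.Perm (Fin 2 × Fin n),
    ((Equiv.Perm.sign σ : ℤ) : ℝ) * ∏ i, N (σ (0, i)) (σ (1, i))

lemma Pf_eq_pfSum (n : ℕ) (M : Matrix (Fin (2 * n)) (Fin (2 * n)) ℝ) :
    Pf n M = (1 / (2 ^ n * (n.factorial : ℝ))) *
      pfSum (M.submatrix (pairEquiv n) (pairEquiv n)) := by
  unfold Pf pfSum
  congr 1
  rw [← Equiv.sum_comp (pairEquiv n).permCongr]
  refine Finset.sum_congr rfl fun σ _ => ?_
  rw [Equiv.Perm.sign_permCongr]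
  simp [← pairEquiv_zero, ← pairEquiv_one, Equiv.permCongr_apply]

lemma pfSum_conj_eq_alternatization {n : ℕ} (u : Fin 2 × Fin n → Fin 2 × Fin n → ℝ)
    (N : Matrix (Fin 2 × Fin n) (Fin 2 × Fin n) ℝ) :
    pfSum (of u * N * (of u)ᵀ) = MultilinearMap.alternatization (pairForm N) u := by
  rw [MultilinearMap.alternatization_apply]
  unfold pfSum
  refine Finset.sum_congr rfl fun σ _ => ?_
  have h : ∀ a b, (of u * N * (of u)ᵀ) a b = u a ⬝ᵥ N *ᵥ u b := by
    intro a b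
    rw [mul_assoc, Matrix.mul_apply']
    rfl
  simp only [h]
  rw [Units.smul_def, zsmul_eq_mul]
  rfl

/-- An alternating form in `2n` vectors of a `2n`-dimensional space is a multiple of `det`. -/
lemma pfSum_conj {n : ℕ} (A N : Matrix (Fin 2 × Fin n) (Fin 2 × Fin n) ℝ) :
    pfSum (A * N * Aᵀ) = A.det * pfSum N := by
  have hA := pfSum_conj_eq_alternatization (of.symm A) N
  have h1 := pfSum_conj_eq_alternatization (Pi.basisFun ℝ (Fin 2 × Fin n)) N
  have hone : of (Pi.basisFun ℝ (Fin 2 × Fin n)) = (1 : Matrix _ _ ℝ) := by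
    ext a b
    simp [Pi.single_apply, one_apply, eq_comm]
  rw [hone, one_mul, transpose_one, mul_one] at h1
  rw [Equiv.apply_symm_apply] at hA
  rw [hA, AlternatingMap.eq_smul_basis_det (Pi.basisFun ℝ (Fin 2 × Fin n))
      (MultilinearMap.alternatization (pairForm N)), ← h1, AlternatingMap.smul_apply,
    Pi.basisFun_det_apply, smul_eq_mul, mul_comm, Equiv.apply_symm_apply]

/-- The diagonal matrix scaling the coordinate `(0, i)` by `d i` and fixing the
coordinates `(1, i)`. -/
def scaleBlocks {n : ℕ} (d : Fin n → ℝ) : Matrix (Fin 2 × Fin n) (Fin 2 × Fin n) ℝ :=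
  blockDiagonal fun i => !![d i, 0; 0, 1]

lemma det_scaleBlocks {n : ℕ} (d : Fin n → ℝ) : (scaleBlocks d).det = ∏ i, d i := by
  simp [scaleBlocks, det_blockDiagonal]

lemma scaleBlocks_transpose {n : ℕ} (d : Fin n → ℝ) : (scaleBlocks d)ᵀ = scaleBlocks d := by
  rw [scaleBlocks, blockDiagonal_transpose]
  congr 1
  funext i
  ext a b
  fin_cases a <;> fin_cases b <;> rfl

lemma scaleBlocks_conj {n : ℕ} (d x : Fin n → ℝ) :
    scaleBlocks d * skewBlocks x * (scaleBlocks d)ᵀ = skewBlocks (d * x) := by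
  rw [scaleBlocks_transpose, scaleBlocks, skewBlocks, ← blockDiagonal_mul, ← blockDiagonal_mul,
    skewBlocks]
  congr 1
  funext i
  simp [mul_comm]

lemma scaleBlocks_orthogonal {n : ℕ} {d : Fin n → ℝ} (hd : ∀ i, d i * d i = 1) :
    (scaleBlocks d)ᵀ * scaleBlocks d = 1 := by
  rw [scaleBlocks_transpose, scaleBlocks, ← blockDiagonal_mul, ← blockDiagonal_one]
  congr 1
  funext i
  simp [hd, Matrix.one_fin_two]

lemma skewBlocks_transpose {n : ℕ} (x : Fin n → ℝ) : (skewBlocks x)ᵀ = -skewBlocks x := by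
  rw [skewBlocks, blockDiagonal_transpose, ← blockDiagonal_neg]
  congr 1
  funext i
  ext a b
  fin_cases a <;> fin_cases b <;> simp

/-- If the product is nonzero, `σ` maps blocks to blocks: it is a permutation of the blocks, which
is even on `Fin 2 × Fin n`, composed with a permutation within each block, whose sign cancels the
sign of the corresponding entry. -/
lemma skewBlocks_one_perm_nonneg {n : ℕ} (σ : Equiv.Perm (Fin 2 × Fin n)) :
    0 ≤ ((Equiv.Perm.sign σ : ℤ) : ℝ) *
      ∏ i, skewBlocks (1 : Fin n → ℝ) (σ (0, i)) (σ (1, i)) := by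
  by_cases h : ∀ i, (σ (0, i)).2 = (σ (1, i)).2
  swap
  · push Not at h
    obtain ⟨i, hi⟩ := h
    rw [Finset.prod_eq_zero (Finset.mem_univ i), mul_zero]
    rw [skewBlocks, blockDiagonal_apply, if_neg hi]
  have h' : ∀ a i, (σ (a, i)).2 = (σ (0, i)).2 := by
    intro a i
    fin_cases a
    · rfl
    · exact (h i).symm
  have hπ : Function.Bijective fun i => (σ (0, i)).2 := by
    refine Finite.injective_iff_bijective.1 (Finite.injective_iff_surjective.2 fun k => ?_)
    refine ⟨(σ.symm (0, k)).2, ?_⟩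
    rw [← h' (σ.symm (0, k)).1]
    simp
  have hs : ∀ i, Function.Bijective fun a => (σ (a, i)).1 := by
    intro i
    refine Finite.injective_iff_bijective.1 fun a b hab => ?_
    have : σ (a, i) = σ (b, i) := Prod.ext hab ((h' a i).trans (h' b i).symm)
    simpa using σ.injective this
  let π : Equiv.Perm (Fin n) := Equiv.ofBijective _ hπ
  let s : Fin n → Equiv.Perm (Fin 2) := fun i => Equiv.ofBijective _ (hs i)
  have hσ : σ = (Equiv.prodCongrRight fun _ : Fin 2 => π) * Equiv.prodCongrLeft s := by
    ext ⟨a, i⟩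
    · simp [s]
    · simp [π, h' a i]
  have hsign : ((Equiv.Perm.sign σ : ℤ) : ℝ) = ∏ i, ((Equiv.Perm.sign (s i) : ℤ) : ℝ) := by
    rw [hσ, map_mul, Equiv.Perm.sign_prodCongrLeft, Equiv.Perm.sign_prodCongrRight]
    simp
  have key : ∀ τ : Equiv.Perm (Fin 2), (Equiv.Perm.sign τ : ℤ) *
      (!![0, 1; -1, 0] : Matrix (Fin 2) (Fin 2) ℤ) (τ 0) (τ 1) = 1 := by decide
  rw [hsign, ← Finset.prod_mul_distrib]
  refine Finset.prod_nonneg fun i _ => ?_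
  rw [skewBlocks, blockDiagonal_apply, if_pos (h i)]
  have hk := congrArg (Int.cast : ℤ → ℝ) (key (s i))
  have hs0 : ∀ a, (σ (a, i)).1 = s i a := fun _ => rfl
  have hcast : ∀ a b, (((!![0, 1; -1, 0] : Matrix (Fin 2) (Fin 2) ℤ) a b : ℤ) : ℝ) =
      (!![0, 1; -1, 0] : Matrix (Fin 2) (Fin 2) ℝ) a b := by
    intro a b
    fin_cases a <;> fin_cases b <;> simp
  rw [Int.cast_mul, hcast, Int.cast_one] at hk
  rw [hs0, hs0, Pi.one_apply, hk]
  exact zero_le_one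

/-- All terms of the sum are nonnegative and the identity contributes `1`. -/
lemma pfSum_skewBlocks_one_pos (n : ℕ) : 0 < pfSum (skewBlocks (1 : Fin n → ℝ)) := by
  refine Finset.sum_pos' (fun σ _ => skewBlocks_one_perm_nonneg σ) ⟨1, Finset.mem_univ _, ?_⟩
  simp [skewBlocks]

lemma Pf_conj {n : ℕ} (A M : Matrix (Fin (2 * n)) (Fin (2 * n)) ℝ) :
    Pf n (A * M * Aᵀ) = A.det * Pf n M := by
  rw [Pf_eq_pfSum, Pf_eq_pfSum, ← det_submatrix_equiv_self (pairEquiv n) A,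
    ← submatrix_mul_equiv _ _ _ (pairEquiv n) _, ← submatrix_mul_equiv _ _ _ (pairEquiv n) _,
    ← transpose_submatrix, pfSum_conj]
  ring

/-- Permuting the blocks is conjugation by a permutation matrix of determinant `(sign π) ^ 2`. -/
lemma exists_perm_conj {n : ℕ} (π : Equiv.Perm (Fin n)) (x : Fin n → ℝ) :
    ∃ A : Matrix (Fin 2 × Fin n) (Fin 2 × Fin n) ℝ, Aᵀ * A = 1 ∧ A.det = 1 ∧
      A * skewBlocks x * Aᵀ = skewBlocks (x ∘ π) := by
  let ρ : Equiv.Perm (Fin 2 × Fin n) := Equiv.prodCongrRight fun _ => π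
  refine ⟨ρ.permMatrix ℝ, ?_, ?_, ?_⟩
  · rw [transpose_permMatrix, ← permMatrix_mul]
    simp
  · rw [det_permutation, Equiv.Perm.sign_prodCongrRight]
    simp
  · rw [transpose_permMatrix, Equiv.Perm.permMatrix, Equiv.Perm.permMatrix,
      PEquiv.toMatrix_toPEquiv_mul, PEquiv.mul_toMatrix_toPEquiv, Equiv.Perm.inv_def,
      Equiv.symm_symm]
    ext ⟨a, i⟩ ⟨b, j⟩
    simp [skewBlocks, blockDiagonal_apply, ρ]

lemma trace_skewBlocks_pow {n : ℕ} (x : Fin n → ℝ) (k : ℕ) :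
    (skewBlocks x ^ (2 * k)).trace = 2 * (-1) ^ k * ∑ i, x i ^ (2 * k) := by
  have h : ∀ i, !![0, x i; -x i, 0] ^ (2 * k) =
      ((-x i ^ 2) ^ k) • (1 : Matrix (Fin 2) (Fin 2) ℝ) := by
    intro i
    have : !![0, x i; -x i, 0] ^ 2 = (-x i ^ 2) • (1 : Matrix (Fin 2) (Fin 2) ℝ) := by
      rw [pow_two]
      ext a b
      fin_cases a <;> fin_cases b <;> simp [pow_two]
    rw [pow_mul, this, smul_pow, one_pow]
  rw [skewBlocks, ← blockDiagonal_pow, trace_blockDiagonal, Finset.mul_sum]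
  refine Finset.sum_congr rfl fun i _ => ?_
  rw [Pi.pow_apply, h, trace_smul, trace_one, neg_pow (x i ^ 2), ← pow_mul]
  simp
  ring

/-! ### Normal form of a skew matrix -/

/-- A nonzero image of an eigenvector `v` of the symmetric operator `T²` is orthogonal to `v` and
mapped back to the line of `v`. If `T` kills an eigenbasis of `T²`, any two of its vectors do. -/
lemma exists_skew_pair {V : Type*} [NormedAddCommGroup V] [InnerProductSpace ℝ V]
    [FiniteDimensional ℝ V] (hV : 2 ≤ Module.finrank ℝ V) (T : V →ₗ[ℝ] V)
    (hT : ∀ x y, inner ℝ (T x) y = -inner ℝ x (T y)) :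
    ∃ (u w : V) (c : ℝ), inner ℝ u u = (1 : ℝ) ∧ inner ℝ w w = (1 : ℝ) ∧ inner ℝ u w = (0 : ℝ) ∧
      T u = -c • w ∧ T w = c • u := by
  have hsymm : (T ∘ₗ T).IsSymmetric := by
    intro x y
    simp [hT]
  let b := hsymm.eigenvectorBasis rfl
  have hb : ∀ i, T (T (b i)) = hsymm.eigenvalues rfl i • b i := fun i =>
    hsymm.apply_eigenvectorBasis rfl i
  have hbn : ∀ i, inner ℝ (b i) (b i) = (1 : ℝ) := fun i => by simp
  by_cases h : ∃ i, T (b i) ≠ 0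
  · obtain ⟨i, hi⟩ := h
    set v := b i with hv
    have hμ : inner ℝ (T v) (T v) = -(hsymm.eigenvalues rfl i) := by
      rw [hT, hb, inner_smul_right, hbn, mul_one]
    have hc : ‖T v‖ ≠ 0 := norm_ne_zero_iff.2 hi
    have h0 : inner ℝ (T v) v = (0 : ℝ) := by
      have := hT v v
      rw [real_inner_comm (T v) v] at this
      linarith [real_inner_comm (T v) v]
    rw [real_inner_self_eq_norm_sq] at hμ
    refine ⟨‖T v‖⁻¹ • T v, v, ‖T v‖, ?_, hbn i, ?_, ?_, ?_⟩
    · rw [inner_smul_left, inner_smul_right, real_inner_self_eq_norm_sq]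
      simp
      field_simp
    · rw [inner_smul_left, h0, mul_zero]
    · rw [map_smul, hb, ← neg_eq_iff_eq_neg.2 hμ, smul_smul]
      congr 1
      field_simp
    · rw [smul_smul, mul_inv_cancel₀ hc, one_smul]
  · push Not at h
    refine ⟨b ⟨0, by omega⟩, b ⟨1, by omega⟩, 0, hbn _, hbn _, ?_, by simp [h], by simp [h]⟩
    exact b.orthonormal.2 (by simp)

/-- The pairs found by `exists_skew_pair` can be collected until their span has dimension `2k`:
the orthogonal complement of such a span is stable under `T`. -/
lemma exists_skew_family {V : Type*} [NormedAddCommGroup V] [InnerProductSpace ℝ V]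
    [FiniteDimensional ℝ V] (T : V →ₗ[ℝ] V)
    (hT : ∀ x y, inner ℝ (T x) y = -inner ℝ x (T y)) (k : ℕ) (hk : 2 * k ≤ Module.finrank ℝ V) :
    ∃ (u w : Fin k → V) (c : Fin k → ℝ),
      (∀ i j, inner ℝ (u i) (u j) = if i = j then (1 : ℝ) else 0) ∧
      (∀ i j, inner ℝ (w i) (w j) = if i = j then (1 : ℝ) else 0) ∧
      (∀ i j, inner ℝ (u i) (w j) = (0 : ℝ)) ∧
      (∀ i, T (u i) = -c i • w i) ∧ (∀ i, T (w i) = c i • u i) := by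
  induction k with
  | zero => exact ⟨Fin.elim0, Fin.elim0, Fin.elim0, by simp⟩
  | succ k ih =>
    obtain ⟨u, w, c, huu, hww, huw, hu, hw⟩ := ih (by omega)
    let S : Submodule ℝ V := Submodule.span ℝ (Set.range (Sum.elim u w))
    have hS : ∀ x, x ∈ Sᗮ ↔ (∀ i, inner ℝ (u i) x = (0 : ℝ)) ∧ ∀ i, inner ℝ (w i) x = (0 : ℝ) := by
      intro x
      rw [Submodule.mem_orthogonal]
      constructor
      · intro h
        exact ⟨fun i => h _ (Submodule.subset_span ⟨Sum.inl i, rfl⟩),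
          fun i => h _ (Submodule.subset_span ⟨Sum.inr i, rfl⟩)⟩
      · rintro ⟨h1, h2⟩ y hy
        induction hy using Submodule.span_induction with
        | mem y hy =>
          obtain ⟨i | i, rfl⟩ := hy
          · exact h1 i
          · exact h2 i
        | zero => simp
        | add y z _ _ hy hz => rw [inner_add_left, hy, hz, add_zero]
        | smul a y _ hy => rw [inner_smul_left, hy, mul_zero]
    have hdim : 2 ≤ Module.finrank ℝ Sᗮ := by
      have h1 := S.finrank_add_finrank_orthogonal
      have h2 : Module.finrank ℝ S ≤ _ := finrank_range_le_card (R := ℝ) (Sum.elim u w)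
      simp only [Fintype.card_sum, Fintype.card_fin] at h2
      omega
    have hTS : ∀ x ∈ Sᗮ, T x ∈ Sᗮ := by
      intro x hx
      rw [hS] at hx ⊢
      refine ⟨fun i => ?_, fun i => ?_⟩
      · rw [← neg_eq_zero, ← hT, hu, inner_smul_left, hx.2, mul_zero]
      · rw [← neg_eq_zero, ← hT, hw, inner_smul_left, hx.1, mul_zero]
    obtain ⟨p, q, d, hpp, hqq, hpq, hp, hq⟩ := exists_skew_pair hdim (T.restrict hTS)
      (fun x y => hT x y)
    have hpS := (hS p).1 p.2
    have hqS := (hS q).1 q.2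
    have hpS' := fun i => (real_inner_comm (u i) (p : V)).trans (hpS.1 i)
    have hqS' := fun i => (real_inner_comm (w i) (q : V)).trans (hqS.2 i)
    have hpS'' := fun i => (real_inner_comm (w i) (p : V)).trans (hpS.2 i)
    have hp' : T p = -d • (q : V) := congrArg Subtype.val hp
    have hq' : T q = d • (p : V) := congrArg Subtype.val hq
    have hpp' : inner ℝ (p : V) p = (1 : ℝ) := hpp
    have hqq' : inner ℝ (q : V) q = (1 : ℝ) := hqq
    have hpq' : inner ℝ (p : V) q = (0 : ℝ) := hpq
    refine ⟨Fin.snoc (α := fun _ => V) u p, Fin.snoc (α := fun _ => V) w q,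
      Fin.snoc (α := fun _ => ℝ) c d, fun i j => ?_, fun i j => ?_, fun i j => ?_, fun i => ?_,
      fun i => ?_⟩
    · refine Fin.lastCases ?_ (fun i => ?_) i <;> refine Fin.lastCases ?_ (fun j => ?_) j <;>
        simp [huu, hpp', hpS.1, hpS', -inner_self_eq_norm_sq_to_K,
          Fin.castSucc_ne_last, (Fin.castSucc_ne_last _).symm]
    · refine Fin.lastCases ?_ (fun i => ?_) i <;> refine Fin.lastCases ?_ (fun j => ?_) j <;>
        simp [hww, hqq', hqS.2, hqS', -inner_self_eq_norm_sq_to_K,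
          Fin.castSucc_ne_last, (Fin.castSucc_ne_last _).symm]
    · refine Fin.lastCases ?_ (fun i => ?_) i <;> refine Fin.lastCases ?_ (fun j => ?_) j <;>
        simp [huw, hpq', hqS.1, hpS'']
    · refine Fin.lastCases ?_ (fun i => ?_) i <;> simp [hu, hp']
    · refine Fin.lastCases ?_ (fun i => ?_) i <;> simp [hw, hq']

/-- The columns of `A` are the vectors of `exists_skew_family`. -/
lemma exists_orthogonal_conj {n : ℕ} (M : Matrix (Fin 2 × Fin n) (Fin 2 × Fin n) ℝ)
    (hM : Mᵀ = -M) : ∃ (A : Matrix (Fin 2 × Fin n) (Fin 2 × Fin n) ℝ) (x : Fin n → ℝ),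
      Aᵀ * A = 1 ∧ M = A * skewBlocks x * Aᵀ := by
  let T := Matrix.toEuclideanLin M
  have hdot : ∀ x y : EuclideanSpace ℝ (Fin 2 × Fin n), inner ℝ x y = y.ofLp ⬝ᵥ x.ofLp := by
    intro x y
    simp [EuclideanSpace.inner_eq_star_dotProduct]
  have hT : ∀ x y, inner ℝ (T x) y = -inner ℝ x (T y) := by
    intro x y
    simp only [T, hdot, Matrix.ofLp_toLpLin, Matrix.toLin'_apply]
    rw [dotProduct_mulVec, ← mulVec_transpose, hM, neg_mulVec, neg_dotProduct]
  obtain ⟨u, w, c, huu, hww, huw, hu, hw⟩ := exists_skew_family T hT n (by simp)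
  let A : Matrix (Fin 2 × Fin n) (Fin 2 × Fin n) ℝ :=
    of fun r p => (if p.1 = 0 then u p.2 else w p.2).ofLp r
  have hA : Aᵀ * A = 1 := by
    ext ⟨a, i⟩ ⟨b, j⟩
    have : (Aᵀ * A) (a, i) (b, j) =
        inner ℝ (if a = 0 then u i else w i) (if b = 0 then u j else w j) := by
      rw [hdot, dotProduct_comm]
      rfl
    rw [this]
    fin_cases a <;> fin_cases b <;>
      simp [huu, hww, huw, one_apply, real_inner_comm,
        -inner_self_eq_norm_sq_to_K]
  have hA' : A * Aᵀ = 1 := mul_eq_one_comm.1 hA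
  have hMA : M * A = A * skewBlocks c := by
    ext r ⟨b, j⟩
    have h1 : (M * A) r (b, j) = (T (if b = 0 then u j else w j)).ofLp r := rfl
    have h2 : (A * skewBlocks c) r (b, j) = ∑ a, A r (a, j) * !![0, c j; -c j, 0] a b := by
      rw [mul_apply, Fintype.sum_prod_type]
      refine Finset.sum_congr rfl fun a _ => ?_
      simp [skewBlocks, blockDiagonal_apply]
    rw [h1, h2]
    fin_cases b <;> simp [hu, hw, A, mul_comm]
  refine ⟨A, c, hA, ?_⟩
  rw [← hMA, mul_assoc, hA', mul_one]

/-- If `det A = -1`, flipping the sign of one block corrects the determinant. -/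
lemma exists_special_orthogonal_conj {n : ℕ} (hn : 1 ≤ n)
    (M : Matrix (Fin 2 × Fin n) (Fin 2 × Fin n) ℝ) (hM : Mᵀ = -M) :
    ∃ (A : Matrix (Fin 2 × Fin n) (Fin 2 × Fin n) ℝ) (x : Fin n → ℝ),
      Aᵀ * A = 1 ∧ A.det = 1 ∧ M = A * skewBlocks x * Aᵀ := by
  obtain ⟨A, x, hA, rfl⟩ := exists_orthogonal_conj M hM
  have hdet : A.det * A.det = 1 := by
    simpa using congrArg Matrix.det hA
  rcases mul_self_eq_one_iff.1 hdet with h | h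
  · exact ⟨A, x, hA, h, rfl⟩
  · let d : Fin n → ℝ := Function.update 1 ⟨0, hn⟩ (-1)
    have hd : ∀ i, d i * d i = 1 := by
      intro i
      by_cases hi : i = ⟨0, hn⟩ <;> simp [d, hi]
    have hD := scaleBlocks_orthogonal hd
    refine ⟨A * scaleBlocks d, d * x, ?_, ?_, ?_⟩
    · rw [transpose_mul, mul_assoc, ← mul_assoc Aᵀ, hA, one_mul, hD]
    · rw [det_mul, h, det_scaleBlocks, Finset.prod_update_of_mem (Finset.mem_univ _)]
      simp
    · have hdd : d * (d * x) = x := by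
        funext i
        simp [← mul_assoc, hd]
      have hassoc : A * scaleBlocks d * skewBlocks (d * x) * (A * scaleBlocks d)ᵀ =
          A * (scaleBlocks d * skewBlocks (d * x) * (scaleBlocks d)ᵀ) * Aᵀ := by
        rw [transpose_mul]
        simp only [mul_assoc]
      rw [hassoc, scaleBlocks_conj, hdd]

/-! ### Invariants of the Weyl group of type `D` -/

open MvPolynomial in
lemma exists_psum_of_isSymmetric {n : ℕ} {g : MvPolynomial (Fin n) ℝ} (hg : g.IsSymmetric) :
    ∃ G : MvPolynomial (Fin n) ℝ, g = aeval (fun i : Fin n => psum (Fin n) ℝ (i + 1)) G := by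
  let S := (aeval (R := ℝ) (fun i : Fin n => psum (Fin n) ℝ (i + 1))).range
  have hpsum : ∀ k, 1 ≤ k → k ≤ n → psum (Fin n) ℝ k ∈ S := by
    intro k h1 h2
    refine ⟨X ⟨k - 1, by omega⟩, ?_⟩
    simp [Nat.sub_add_cancel h1]
  have hesymm : ∀ k, k ≤ n → esymm (Fin n) ℝ k ∈ S := by
    intro k
    induction k using Nat.strong_induction_on with
    | _ k ih =>
      intro hk
      rcases Nat.eq_zero_or_pos k with rfl | hpos
      · rw [esymm_zero]
        exact S.one_mem
      -- The Newton identity, divided by `k`.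
      have hN := mul_esymm_eq_sum (Fin n) ℝ k
      have hmem : (k : MvPolynomial (Fin n) ℝ) * esymm (Fin n) ℝ k ∈ S := by
        have hsgn : ∀ j : ℕ, (-1 : MvPolynomial (Fin n) ℝ) ^ j ∈ S := fun j =>
          S.pow_mem (S.neg_mem S.one_mem) j
        rw [hN]
        refine S.mul_mem (hsgn _) (S.sum_mem fun a ha => ?_)
        rw [Finset.mem_filter, Finset.HasAntidiagonal.mem_antidiagonal] at ha
        exact S.mul_mem (S.mul_mem (hsgn _) (ih _ ha.2 (by omega))) (hpsum _ (by omega) (by omega))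
      have hk0 : (k : ℝ) ≠ 0 := by positivity
      have := S.smul_mem hmem (k : ℝ)⁻¹
      rwa [← nsmul_eq_mul, ← Nat.cast_smul_eq_nsmul ℝ, smul_smul, inv_mul_cancel₀ hk0,
        one_smul] at this
  obtain ⟨q, hq⟩ := esymmAlgHom_surjective (σ := Fin n) ℝ (n := n) (by simp) ⟨g, hg⟩
  have hq' : aeval (fun i : Fin n => esymm (Fin n) ℝ (i + 1)) q = g :=
    (esymmAlgHom_apply q).symm.trans (congrArg Subtype.val hq)
  have hmem : g ∈ S := by
    rw [← hq']
    clear hq hq'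
    induction q using MvPolynomial.induction_on with
    | C a =>
      rw [aeval_C]
      exact S.algebraMap_mem a
    | add p q hp hq =>
      rw [map_add]
      exact S.add_mem hp hq
    | mul_X p i hp =>
      rw [map_mul, aeval_X]
      exact S.mul_mem hp (hesymm _ i.2)
  obtain ⟨G, hG⟩ := hmem
  exact ⟨G, hG.symm⟩

open MvPolynomial in
lemma coeff_aeval_scale {n : ℕ} (d : Fin n → ℝ) (p : MvPolynomial (Fin n) ℝ) (m : Fin n →₀ ℕ) :
    coeff m (aeval (fun i => C (d i) * X i) p) = (∏ i, d i ^ m i) * coeff m p := by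
  induction p using MvPolynomial.induction_on' with
  | monomial u a =>
    have : aeval (fun i => C (d i) * X i) (monomial u a) = monomial u ((∏ i, d i ^ u i) * a) := by
      rw [aeval_monomial, Finsupp.prod_fintype _ _ (by simp), monomial_eq,
        Finsupp.prod_fintype _ _ (by simp)]
      simp only [mul_pow, Finset.prod_mul_distrib, algebraMap_eq, C_mul, map_prod, map_pow]
      ring
    rw [this, coeff_monomial, coeff_monomial]
    split_ifs with h
    · rw [h]
    · rw [mul_zero]
  | add p q hp hq => rw [map_add, coeff_add, coeff_add, hp, hq, mul_add]

open MvPolynomial in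
/-- Invariance under simultaneous sign changes of two variables forces all exponents
of a monomial to have the same parity. -/
lemma even_iff_of_mem_support {n : ℕ} {p : MvPolynomial (Fin n) ℝ}
    (hsign : ∀ d : Fin n → ℝ, (∀ i, d i * d i = 1) → ∏ i, d i = 1 →
      ∀ x, eval (d * x) p = eval x p) {m : Fin n →₀ ℕ} (hm : m ∈ p.support) (i j : Fin n) :
    Even (m i) ↔ Even (m j) := by
  rcases eq_or_ne i j with rfl | hij
  · rfl
  let d : Fin n → ℝ := Function.update (Function.update 1 i (-1)) j (-1)
  have hdi : d i = -1 := by simp [d, hij]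
  have hdj : d j = -1 := by simp [d]
  have hdk : ∀ k, k ≠ i → k ≠ j → d k = 1 := fun k h1 h2 => by simp [d, h1, h2]
  have hprod : ∀ f : Fin n → ℕ, ∏ k, d k ^ f k = (-1) ^ (f i + f j) := by
    intro f
    rw [Fintype.prod_eq_mul i j hij, hdi, hdj, pow_add]
    rintro k ⟨h1, h2⟩
    rw [hdk k h1 h2, one_pow]
  have hinv : aeval (fun i => C (d i) * X i) p = p := by
    refine MvPolynomial.funext fun x => ?_
    rw [← hsign d _ _ x]
    · rw [← coe_aeval_eq_eval, ← coe_aeval_eq_eval]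
      change ((aeval x).comp (aeval fun i => C (d i) * X i)) p = aeval (d * x) p
      congr 1
      ext i
      simp
    · intro k
      by_cases h1 : k = i
      · simp [h1, hdi]
      · by_cases h2 : k = j
        · simp [h2, hdj]
        · simp [hdk k h1 h2]
    · simpa using hprod 1
  have h := coeff_aeval_scale d p m
  rw [hinv, hprod] at h
  have h1 : (-1 : ℝ) ^ (m i + m j) = 1 :=
    (mul_eq_right₀ (mem_support_iff.1 hm)).1 h.symm
  rw [neg_one_pow_eq_one_iff_even (by norm_num), Nat.even_add] at h1
  exact h1

open MvPolynomial in
/-- Invariants of the Weyl group of type `D`: `p` splits into the part with even exponents and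
the part with odd exponents. The latter is `∏ x i` times an even part, and the sign change of a single
variable separates the two parts, so that both even parts are symmetric in the squares. -/
lemma exists_weyl_invariant {n : ℕ} (hn : 1 ≤ n) {p : MvPolynomial (Fin n) ℝ}
    (hperm : ∀ (π : Equiv.Perm (Fin n)) (x), eval (x ∘ π) p = eval x p)
    (hsign : ∀ d : Fin n → ℝ, (∀ i, d i * d i = 1) → ∏ i, d i = 1 →
      ∀ x, eval (d * x) p = eval x p) :
    ∃ G H : MvPolynomial (Fin n) ℝ, ∀ x : Fin n → ℝ,
      eval x p = eval (fun i : Fin n => ∑ j, x j ^ (2 * (i.1 + 1))) G +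
        (∏ i, x i) * eval (fun i : Fin n => ∑ j, x j ^ (2 * (i.1 + 1))) H := by
  let z : Fin n := ⟨0, hn⟩
  let E : MvPolynomial (Fin n) ℝ := ∏ i, X i
  have hdecomp : ∃ g h, p = expand 2 g + E * expand 2 h := by
    let L : MvPolynomial (Fin n) ℝ × MvPolynomial (Fin n) ℝ →ₗ[ℝ] MvPolynomial (Fin n) ℝ :=
      (expand 2).toLinearMap.coprod (LinearMap.mulLeft ℝ E ∘ₗ (expand 2).toLinearMap)
    suffices hp : p ∈ LinearMap.range L by
      obtain ⟨⟨g, h⟩, hgh⟩ := hp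
      exact ⟨g, h, hgh.symm⟩
    rw [p.as_sum]
    refine Submodule.sum_mem _ fun m hm => ?_
    have hpar := fun i => even_iff_of_mem_support hsign hm z i
    let m' : Fin n →₀ ℕ := m.mapRange (· / 2) rfl
    by_cases hz : Even (m z)
    · refine ⟨(monomial m' (coeff m p), 0), ?_⟩
      have : 2 • m' = m := by
        ext i
        simpa [m'] using Nat.two_mul_div_two_of_even ((hpar i).1 hz)
      simp [L, expand_monomial, this]
    · refine ⟨(0, monomial m' (coeff m p)), ?_⟩
      have hm' : (∑ i, Finsupp.single i 1) + 2 • m' = m := by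
        ext i
        have := Nat.two_mul_div_two_add_one_of_odd (Nat.not_even_iff_odd.1 fun h => hz ((hpar i).2 h))
        simp only [Finsupp.add_apply, Finsupp.finsetSum_apply, Finsupp.smul_apply, m',
          Finsupp.mapRange_apply, smul_eq_mul]
        simp [Finsupp.single_apply]
        omega
      have hE : E = monomial (∑ i, Finsupp.single i 1) 1 := by
        simp [E, monomial_sum_one, X]
      simp [L, expand_monomial, hE, monomial_mul, hm']
  obtain ⟨g, h, rfl⟩ := hdecomp
  have hev : ∀ x : Fin n → ℝ, eval x (expand 2 g + E * expand 2 h) =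
      eval (x ^ 2) g + (∏ i, x i) * eval (x ^ 2) h := by
    intro x
    simp [E, eval_expand]
  simp only [hev] at hperm ⊢
  let d : Fin n → ℝ := Function.update 1 z (-1)
  have hd2 : ∀ x : Fin n → ℝ, (d * x) ^ 2 = x ^ 2 := by
    intro x
    funext i
    by_cases hi : i = z <;> simp [d, hi]
  have hd1 : ∀ x : Fin n → ℝ, ∏ i, (d * x) i = -∏ i, x i := by
    intro x
    simp only [Pi.mul_apply, Finset.prod_mul_distrib]
    rw [Finset.prod_update_of_mem (Finset.mem_univ _)]
    simp
  have hcomp : ∀ (π : Equiv.Perm (Fin n)) (x : Fin n → ℝ),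
      eval ((x ^ 2) ∘ π) g = eval (x ^ 2) g ∧
      (∏ i, x i) * eval ((x ^ 2) ∘ π) h = (∏ i, x i) * eval (x ^ 2) h := by
    intro π x
    have hc : ∀ y : Fin n → ℝ, (y ∘ π) ^ 2 = (y ^ 2) ∘ π := fun y => rfl
    have hc' : ∀ y : Fin n → ℝ, ∏ i, (y ∘ π) i = ∏ i, y i := fun y => Equiv.prod_comp π y
    have h1 := hperm π x
    have h2 := hperm π (d * x)
    rw [hc, hc'] at h1 h2
    rw [hd2, hd1] at h2
    constructor <;> linarith
  have hg : g.IsSymmetric := by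
    intro π
    refine expand_injective (n := 2) two_pos (MvPolynomial.funext fun x => ?_)
    rw [eval_expand, eval_expand, eval_rename, (hcomp π x).1]
  have hh : h.IsSymmetric := by
    intro π
    have hE : E ≠ 0 := Finset.prod_ne_zero_iff.2 fun i _ => X_ne_zero i
    refine expand_injective (n := 2) two_pos (mul_left_cancel₀ hE (MvPolynomial.funext fun x => ?_))
    have := (hcomp π x).2
    simpa [E, eval_expand, eval_rename] using this
  obtain ⟨G, rfl⟩ := exists_psum_of_isSymmetric hg
  obtain ⟨H, rfl⟩ := exists_psum_of_isSymmetric hh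
  have hpow : ∀ (x : Fin n → ℝ) (F : MvPolynomial (Fin n) ℝ),
      eval (x ^ 2) (aeval (fun i : Fin n => psum (Fin n) ℝ (i + 1)) F) =
        eval (fun i : Fin n => ∑ j, x j ^ (2 * (i.1 + 1))) F := by
    intro x F
    rw [← coe_aeval_eq_eval, ← coe_aeval_eq_eval]
    change ((aeval (x ^ 2)).comp (aeval _)) F = aeval _ F
    congr 1
    ext i
    simp [psum, pow_mul]
  exact ⟨G, H, fun x => by rw [hpow, hpow]⟩

/-! ### Restriction to block diagonal matrices -/

lemma Pf_skewBlocks {n : ℕ} (x : Fin n → ℝ) :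
    Pf n ((skewBlocks x).submatrix (pairEquiv n).symm (pairEquiv n).symm) =
      (1 / (2 ^ n * (n.factorial : ℝ))) * pfSum (skewBlocks (1 : Fin n → ℝ)) * ∏ i, x i := by
  have h : skewBlocks x = scaleBlocks x * skewBlocks 1 * (scaleBlocks x)ᵀ := by
    rw [scaleBlocks_conj, mul_one]
  rw [Pf_eq_pfSum, submatrix_submatrix, Equiv.symm_comp_self, submatrix_id_id, h, pfSum_conj,
    det_scaleBlocks]
  ring

/-- The skew normal form, transported to the index set `Fin (2 * n)`. -/
lemma exists_skewBlocks_conj {n : ℕ} (hn : 1 ≤ n) (M : Matrix (Fin (2 * n)) (Fin (2 * n)) ℝ)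
    (hM : Mᵀ = -M) :
    ∃ (A : Matrix (Fin (2 * n)) (Fin (2 * n)) ℝ) (x : Fin n → ℝ), Aᵀ * A = 1 ∧ A.det = 1 ∧
      M = A * (skewBlocks x).submatrix (pairEquiv n).symm (pairEquiv n).symm * Aᵀ := by
  have hM' : (M.submatrix (pairEquiv n) (pairEquiv n))ᵀ =
      -M.submatrix (pairEquiv n) (pairEquiv n) := by
    rw [transpose_submatrix, hM]
    rfl
  obtain ⟨A, x, hA, hdet, h⟩ := exists_special_orthogonal_conj hn _ hM'
  refine ⟨A.submatrix (pairEquiv n).symm (pairEquiv n).symm, x, ?_, ?_, ?_⟩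
  · rw [transpose_submatrix, submatrix_mul_equiv, hA, submatrix_one_equiv]
  · rw [det_submatrix_equiv_self, hdet]
  · rw [transpose_submatrix, submatrix_mul_equiv, submatrix_mul_equiv, ← h, submatrix_submatrix,
      Equiv.self_comp_symm, submatrix_id_id]

open MvPolynomial in
/-- The restriction of `P` to the matrices `skewBlocks x`, as a polynomial in `x`. -/
def restrictBlocks {n : ℕ} (P : MvPolynomial (Fin (2 * n) × Fin (2 * n)) ℝ) :
    MvPolynomial (Fin n) ℝ :=
  aeval (fun p => skewBlocks (X : Fin n → MvPolynomial (Fin n) ℝ)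
    ((pairEquiv n).symm p.1) ((pairEquiv n).symm p.2)) P

open MvPolynomial in
lemma eval_restrictBlocks {n : ℕ} (P : MvPolynomial (Fin (2 * n) × Fin (2 * n)) ℝ)
    (x : Fin n → ℝ) : eval x (restrictBlocks P) =
      eval (fun p => (skewBlocks x).submatrix (pairEquiv n).symm (pairEquiv n).symm p.1 p.2) P := by
  rw [restrictBlocks, ← coe_aeval_eq_eval, ← coe_aeval_eq_eval]
  change ((aeval x).comp (aeval _)) P = aeval _ P
  congr 1
  ext p
  rw [AlgHom.comp_apply, aeval_X, aeval_X, submatrix_apply]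
  generalize (pairEquiv n).symm p.1 = a
  generalize (pairEquiv n).symm p.2 = b
  obtain ⟨a, i⟩ := a
  obtain ⟨b, j⟩ := b
  rw [skewBlocks, skewBlocks, blockDiagonal_apply, blockDiagonal_apply]
  split_ifs
  · fin_cases a <;> fin_cases b <;> simp
  · simp

/-- Every polynomial function on `2n × 2n` matrices which, on skew-symmetric matrices,
is invariant under the action `M ↦ A M Aᵀ` of `SO(2n)` can be written, on
skew-symmetric matrices, as a polynomial in `tr(M²), tr(M⁴), …, tr(M^{2n})` and the
Pfaffian `Pf M`. -/
theorem so_invariants_of_skew (n : ℕ) (hn : 1 ≤ n)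
    (P : MvPolynomial (Fin (2 * n) × Fin (2 * n)) ℝ)
    (hinv : ∀ M : Matrix (Fin (2 * n)) (Fin (2 * n)) ℝ, Mᵀ = -M →
      ∀ A : Matrix (Fin (2 * n)) (Fin (2 * n)) ℝ, Aᵀ * A = 1 → A.det = 1 →
        MvPolynomial.eval (fun p : Fin (2 * n) × Fin (2 * n) => (A * M * Aᵀ) p.1 p.2) P =
        MvPolynomial.eval (fun p : Fin (2 * n) × Fin (2 * n) => M p.1 p.2) P) :
    ∃ Q : MvPolynomial (Fin (n + 1)) ℝ,
      ∀ M : Matrix (Fin (2 * n)) (Fin (2 * n)) ℝ, Mᵀ = -M →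
        MvPolynomial.eval (fun p : Fin (2 * n) × Fin (2 * n) => M p.1 p.2) P =
        MvPolynomial.eval (fun s : Fin (n + 1) =>
          if s.1 < n then (M ^ (2 * (s.1 + 1))).trace else Pf n M) Q := by
  let e := pairEquiv n
  have hskew : ∀ x : Fin n → ℝ, ((skewBlocks x).submatrix e.symm e.symm)ᵀ =
      -(skewBlocks x).submatrix e.symm e.symm := by
    intro x
    rw [transpose_submatrix, skewBlocks_transpose]
    rfl
  have hrestrict : ∀ (A : Matrix (Fin 2 × Fin n) (Fin 2 × Fin n) ℝ) (x y : Fin n → ℝ),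
      Aᵀ * A = 1 → A.det = 1 → A * skewBlocks x * Aᵀ = skewBlocks y →
      MvPolynomial.eval y (restrictBlocks P) = MvPolynomial.eval x (restrictBlocks P) := by
    intro A x y hA hdet h
    have := hinv _ (hskew x) (A.submatrix e.symm e.symm)
      (by rw [transpose_submatrix, submatrix_mul_equiv, hA, submatrix_one_equiv])
      (by rw [det_submatrix_equiv_self, hdet])
    rw [transpose_submatrix, submatrix_mul_equiv, submatrix_mul_equiv, h] at this
    rw [eval_restrictBlocks, eval_restrictBlocks]
    exact this
  obtain ⟨G, H, hGH⟩ := exists_weyl_invariant hn (p := restrictBlocks P)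
    (fun π x => by
      obtain ⟨A, hA, hdet, h⟩ := exists_perm_conj π x
      exact hrestrict A x _ hA hdet h)
    (fun d hd hprod x => hrestrict (scaleBlocks d) x _ (scaleBlocks_orthogonal hd)
      (by rw [det_scaleBlocks, hprod]) (scaleBlocks_conj d x))
  let c : ℝ := (1 / (2 ^ n * (n.factorial : ℝ))) * pfSum (skewBlocks (1 : Fin n → ℝ))
  have hc : c ≠ 0 := by
    have := pfSum_skewBlocks_one_pos n
    positivity
  -- The substitution recovering `∑ j, x j ^ (2 * (i + 1))` from the trace of the `2 (i + 1)`-th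
  -- power of `skewBlocks x`.
  let f : Fin n → MvPolynomial (Fin (n + 1)) ℝ := fun i =>
    MvPolynomial.C (2 * (-1) ^ (i.1 + 1))⁻¹ * MvPolynomial.X i.castSucc
  refine ⟨MvPolynomial.aeval f G +
    MvPolynomial.C c⁻¹ * MvPolynomial.X (Fin.last n) * MvPolynomial.aeval f H, fun M hM => ?_⟩
  obtain ⟨A, x, hA, hdet, rfl⟩ := exists_skewBlocks_conj hn M hM
  have htrace : ∀ k, ((A * (skewBlocks x).submatrix e.symm e.symm * Aᵀ) ^ k).trace =
      (skewBlocks x ^ k).trace := by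
    intro k
    have hpow : (A * (skewBlocks x).submatrix e.symm e.symm * Aᵀ) ^ k =
        A * (skewBlocks x ^ k).submatrix e.symm e.symm * Aᵀ := by
      induction k with
      | zero => simp [mul_eq_one_comm.1 hA]
      | succ k ih =>
        rw [pow_succ, ih, pow_succ, ← submatrix_mul_equiv _ _ _ e.symm _]
        calc _ = A * (skewBlocks x ^ k).submatrix e.symm e.symm * (Aᵀ * A) *
              (skewBlocks x).submatrix e.symm e.symm * Aᵀ := by simp only [mul_assoc]
          _ = _ := by rw [hA, mul_one]; simp only [mul_assoc]
    rw [hpow, trace_mul_comm, ← mul_assoc, hA, one_mul]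
    exact Equiv.sum_comp e.symm fun a => (skewBlocks x ^ k) a a
  rw [hinv _ (hskew x) A hA hdet, ← eval_restrictBlocks, hGH]
  have hf : ∀ F : MvPolynomial (Fin n) ℝ, MvPolynomial.eval (fun s : Fin (n + 1) =>
      if s.1 < n then ((A * (skewBlocks x).submatrix e.symm e.symm * Aᵀ) ^ (2 * (s.1 + 1))).trace
      else Pf n (A * (skewBlocks x).submatrix e.symm e.symm * Aᵀ)) (MvPolynomial.aeval f F) =
      MvPolynomial.eval (fun i : Fin n => ∑ j, x j ^ (2 * (i.1 + 1))) F := by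
    intro F
    rw [← MvPolynomial.coe_aeval_eq_eval, ← MvPolynomial.coe_aeval_eq_eval]
    change ((MvPolynomial.aeval _).comp (MvPolynomial.aeval f)) F = MvPolynomial.aeval _ F
    congr 1
    ext i
    have h2 : (2 * (-1) ^ (i.1 + 1) : ℝ) ≠ 0 := by simp
    rw [AlgHom.comp_apply, MvPolynomial.aeval_X, MvPolynomial.aeval_X, map_mul,
      MvPolynomial.aeval_X, MvPolynomial.aeval_C, if_pos (by simp), htrace, trace_skewBlocks_pow]
    exact inv_mul_cancel_left₀ h2 _
  have hPf : Pf n (A * (skewBlocks x).submatrix e.symm e.symm * Aᵀ) = c * ∏ i, x i := by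
    rw [Pf_conj, hdet, one_mul, Pf_skewBlocks]
  rw [map_add, map_mul, map_mul, hf, hf, MvPolynomial.eval_C, MvPolynomial.eval_X,
    if_neg (by simp), hPf, inv_mul_cancel_left₀ hc]
end
end

section
/- Let N ≥ 2 and let P be a polynomial function on N×N real matrices which is infinitesimally invariant under the action M ↦ V M + M Vᵀ of the Lie algebra o_N: for every skew-symmetric real N×N matrix V and every real N×N matrix M, the derivative at t = 0 of the real polynomial function t ↦ P(M + t(V M + M Vᵀ)) is zero. Then P is invariant under the corresponding group action: P(A M Aᵀ) = P(M) for every real N×N matrix A with AᵀA = I and det A = 1, and every real N×N matrix M. -/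
/-!
If `R(t)` is a differentiable curve of orthogonal matrices, then `V = R' Rᵀ` is skew-symmetric and
`t ↦ R M Rᵀ` has velocity `V X + X Vᵀ` at `X = R M Rᵀ`, so infinitesimal invariance makes
`t ↦ P (R M Rᵀ)` constant (`deriv_conj_eq_zero`).

This is applied to curves of hyperplane reflections `house w = 1 - 2 w wᵀ / (w ⬝ w)`, where `w` runs
along the line through `u` and `v`. It shows that `P (house u * M * (house u)ᵀ)` does not depend on
the nonzero vector `u` (`evalMat_house_eq`). Consequently `P` is invariant under a product of two
reflections, hence under a product of an even number of them (`evalMat_prod_house`).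

By Cartan–Dieudonné every orthogonal matrix is a product of reflections (`exists_prod_house`), and
determinant `1` forces their number to be even.
-/

noncomputable section

open Matrix

/-- The matrix `1 - 2 v vᵀ / (v ⬝ v)` of the reflection in the hyperplane orthogonal to `v`.
For `v = 0` this is the identity, which agrees with Mathlib's `(ℝ ∙ v)ᗮ.reflection`. -/
def house {N : ℕ} (v : Fin N → ℝ) : Matrix (Fin N) (Fin N) ℝ :=
  1 - (2 / (v ⬝ᵥ v)) • vecMulVec v v

/-- The value at the matrix `M` of a polynomial in the entries of an `N × N` matrix. -/
def evalMat {N : ℕ} (P : MvPolynomial (Fin N × Fin N) ℝ) (M : Matrix (Fin N) (Fin N) ℝ) : ℝ :=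
  MvPolynomial.eval (fun p : Fin N × Fin N => M p.1 p.2) P

lemma house_zero {N : ℕ} : house (0 : Fin N → ℝ) = 1 := by
  simp [house]

lemma house_transpose {N : ℕ} (v : Fin N → ℝ) : (house v)ᵀ = house v := by
  simp [house, transpose_vecMulVec]

lemma dot_self_ne {N : ℕ} {v : Fin N → ℝ} (hv : v ≠ 0) : v ⬝ᵥ v ≠ 0 :=
  fun h => hv (dotProduct_self_eq_zero.1 h)

lemma house_mul_self {N : ℕ} (v : Fin N → ℝ) : house v * house v = 1 := by
  rcases eq_or_ne v 0 with rfl | hv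
  · simp [house_zero]
  have h := dot_self_ne hv
  simp only [house, mul_sub, sub_mul, one_mul, mul_one, smul_mul_assoc, mul_smul_comm,
    vecMulVec_mul_vecMulVec, vecMulVec_smul]
  match_scalars <;> field_simp <;> ring

lemma det_house {N : ℕ} {v : Fin N → ℝ} (hv : v ≠ 0) : (house v).det = -1 := by
  have h := dot_self_ne hv
  have : house v = 1 + vecMulVec (-(2 / (v ⬝ᵥ v)) • v) v := by
    simp [house, sub_eq_add_neg, smul_vecMulVec, neg_vecMulVec]
  rw [this, vecMulVec_eq Unit, det_one_add_replicateCol_mul_replicateRow, dotProduct_smul, smul_eq_mul]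
  field_simp
  ring

lemma house_smul {N : ℕ} (v : Fin N → ℝ) {c : ℝ} (hc : c ≠ 0) : house (c • v) = house v := by
  rcases eq_or_ne v 0 with rfl | hv
  · simp
  have h := dot_self_ne hv
  simp only [house, smul_vecMulVec, vecMulVec_smul, dotProduct_smul, smul_dotProduct, smul_smul]
  congr 2
  simp only [smul_eq_mul]
  field_simp

lemma differentiable_evalMat {N : ℕ} (P : MvPolynomial (Fin N × Fin N) ℝ) :
    Differentiable ℝ (fun x : Fin N × Fin N → ℝ => MvPolynomial.eval x P) := by
  intro x
  exact (AnalyticOnNhd.eval_mvPolynomial P x (Set.mem_univ _)).differentiableAt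

/-- An infinitesimally invariant polynomial has derivative zero along `R(s) M R(s)ᵀ` for every
curve `R` of orthogonal matrices that is differentiable at `t`. -/
lemma deriv_conj_eq_zero {N : ℕ} {P : MvPolynomial (Fin N × Fin N) ℝ}
    (hinv : ∀ V : Matrix (Fin N) (Fin N) ℝ, Vᵀ = -V → ∀ M : Matrix (Fin N) (Fin N) ℝ,
      deriv (fun t : ℝ => evalMat P (M + t • (V * M + M * Vᵀ))) 0 = 0)
    {R : ℝ → Matrix (Fin N) (Fin N) ℝ} {R' : Matrix (Fin N) (Fin N) ℝ} {t : ℝ}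
    (hR : ∀ i j, HasDerivAt (fun s => R s i j) (R' i j) t)
    (horth : ∀ s, R s * (R s)ᵀ = 1) (M : Matrix (Fin N) (Fin N) ℝ) :
    HasDerivAt (fun s => evalMat P (R s * M * (R s)ᵀ)) 0 t := by
  have horth' : ∀ s, (R s)ᵀ * R s = 1 := fun s => mul_eq_one_comm.1 (horth s)
  -- Differentiating `R Rᵀ = 1` shows that `R' Rᵀ` is skew-symmetric.
  have hskew : R' * (R t)ᵀ + R t * R'ᵀ = 0 := by
    ext i j
    have h1 : HasDerivAt (fun s => (R s * (R s)ᵀ) i j) ((R' * (R t)ᵀ + R t * R'ᵀ) i j) t := by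
      simp only [Matrix.add_apply, Matrix.mul_apply, transpose_apply, ← Finset.sum_add_distrib]
      exact HasDerivAt.fun_sum fun k _ => (hR i k).mul (hR j k)
    simp only [horth] at h1
    exact h1.unique (hasDerivAt_const t _)
  set V := R' * (R t)ᵀ with hV
  have hVt : Vᵀ = R t * R'ᵀ := by simp [hV]
  have hVs : Vᵀ = -V := by rw [hVt]; exact eq_neg_of_add_eq_zero_right hskew
  set X := R t * M * (R t)ᵀ with hX
  have hVX : V * X + X * Vᵀ = R' * M * (R t)ᵀ + R t * M * R'ᵀ := by
    rw [hVt, hX, hV]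
    congr 1
    · calc _ = R' * ((R t)ᵀ * R t) * M * (R t)ᵀ := by simp only [Matrix.mul_assoc]
        _ = _ := by rw [horth', Matrix.mul_one]
    · calc _ = R t * M * ((R t)ᵀ * R t) * R'ᵀ := by simp only [Matrix.mul_assoc]
        _ = _ := by rw [horth', Matrix.mul_one]
  let F : (Fin N × Fin N → ℝ) → ℝ := fun x => MvPolynomial.eval x P
  let flat : Matrix (Fin N) (Fin N) ℝ → (Fin N × Fin N → ℝ) := fun Y p => Y p.1 p.2
  have hF := (differentiable_evalMat P (flat X)).hasFDerivAt
  have hcurve : HasDerivAt (fun s => flat (R s * M * (R s)ᵀ)) (flat (V * X + X * Vᵀ)) t := by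
    rw [hVX, hasDerivAt_pi]
    rintro ⟨i, j⟩
    simp only [flat, Matrix.add_apply, Matrix.mul_apply, transpose_apply,
      ← Finset.sum_add_distrib]
    refine HasDerivAt.fun_sum fun k _ => ?_
    exact (HasDerivAt.fun_sum fun l _ => (hR i l).mul_const (M l k)).mul (hR j k)
  have hline : HasDerivAt (fun s : ℝ => flat (X + s • (V * X + X * Vᵀ)))
      (flat (V * X + X * Vᵀ)) 0 := by
    rw [hasDerivAt_pi]
    rintro ⟨i, j⟩
    simpa [flat, mul_add] using ((hasDerivAt_id (0 : ℝ)).mul_const ((V * X + X * Vᵀ) i j)).const_add (X i j)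
  -- The derivative of `P` at `X` in the direction `V X + X Vᵀ` can be computed along the straight
  -- line of the hypothesis; the curve `R M Rᵀ` has the same velocity at `X`.
  have h0 := (HasFDerivAt.comp_hasDerivAt_of_eq (0 : ℝ) hF hline (by simp)).deriv
  have hzero := h0.symm.trans (hinv V hVs X)
  have h2 := HasFDerivAt.comp_hasDerivAt_of_eq t hF hcurve rfl
  rw [hzero] at h2
  exact h2

/-- All hyperplane reflections act on an infinitesimally invariant polynomial in the same way:
two of them are joined by a differentiable curve of reflections. -/
lemma evalMat_house_eq {N : ℕ} {P : MvPolynomial (Fin N × Fin N) ℝ}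
    (hinv : ∀ V : Matrix (Fin N) (Fin N) ℝ, Vᵀ = -V → ∀ M : Matrix (Fin N) (Fin N) ℝ,
      deriv (fun t : ℝ => evalMat P (M + t • (V * M + M * Vᵀ))) 0 = 0)
    {u v : Fin N → ℝ} (hu : u ≠ 0) (hv : v ≠ 0) (M : Matrix (Fin N) (Fin N) ℝ) :
    evalMat P (house u * M * (house u)ᵀ) = evalMat P (house v * M * (house v)ᵀ) := by
  by_cases hdep : ∃ t : ℝ, u + t • (v - u) = 0
  -- If the line through `u` and `v` meets `0`, then `u` and `v` are proportional and define the same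
  -- reflection; otherwise the reflections along this line form a differentiable curve.
  · obtain ⟨t, ht⟩ := hdep
    have ht0 : t ≠ 0 := by rintro rfl; simp at ht; exact hu ht
    have hlin : t • v = (t - 1) • u := by
      rw [← sub_eq_zero, ← ht]; module
    have ht1 : t - 1 ≠ 0 := by
      intro h
      rw [h, zero_smul, smul_eq_zero] at hlin
      exact hlin.elim ht0 hv
    rw [← house_smul u ht1, ← hlin, house_smul v ht0]
  · push Not at hdep
    let w : ℝ → Fin N → ℝ := fun t => u + t • (v - u)
    have hw : ∀ t, w t ⬝ᵥ w t ≠ 0 := fun t => dot_self_ne (hdep t)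
    have hd : ∀ i j, Differentiable ℝ (fun t => house (w t) i j) := by
      intro i j
      have hwd : ∀ k, Differentiable ℝ (fun t => w t k) := by
        intro k; simp only [w, Pi.add_apply, Pi.smul_apply, smul_eq_mul]; fun_prop
      have hdot : Differentiable ℝ (fun t => w t ⬝ᵥ w t) := by
        simp only [dotProduct]; fun_prop
      simp only [house, Matrix.sub_apply, Matrix.smul_apply, vecMulVec_apply, smul_eq_mul]
      exact (differentiable_const _).sub
        (((differentiable_const _).div hdot hw).mul ((hwd i).mul (hwd j)))
    have hder : ∀ t, HasDerivAt
        (fun s => evalMat P (house (w s) * M * (house (w s))ᵀ)) 0 t := fun t =>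
      deriv_conj_eq_zero hinv (R := fun s => house (w s))
        (R' := Matrix.of fun i j => deriv (fun s => house (w s) i j) t)
        (fun i j => (hd i j t).hasDerivAt)
        (fun s => by rw [house_transpose, house_mul_self]) M
    have := is_const_of_deriv_eq_zero (fun t => (hder t).differentiableAt)
      (fun t => (hder t).deriv) 0 1
    simpa [w] using this

/-- A product of reflections acts on an infinitesimally invariant polynomial trivially or as the
fixed reflection `house e`, according to its determinant, i.e. the parity of the number of factors.
The vectors may vanish; such factors are identity matrices. -/
lemma evalMat_prod_house {N : ℕ} {P : MvPolynomial (Fin N × Fin N) ℝ}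
    (hinv : ∀ V : Matrix (Fin N) (Fin N) ℝ, Vᵀ = -V → ∀ M : Matrix (Fin N) (Fin N) ℝ,
      deriv (fun t : ℝ => evalMat P (M + t • (V * M + M * Vᵀ))) 0 = 0)
    {e : Fin N → ℝ} (he : e ≠ 0) (l : List (Fin N → ℝ)) :
    ((l.map house).prod.det = 1 ∧
      ∀ M, evalMat P ((l.map house).prod * M * (l.map house).prodᵀ) = evalMat P M) ∨
    ((l.map house).prod.det = -1 ∧
      ∀ M, evalMat P ((l.map house).prod * M * (l.map house).prodᵀ) =
        evalMat P (house e * M * (house e)ᵀ)) := by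
  -- In `P (A M Aᵀ)` the leftmost factor of `A` acts last, so the hypothesis on `A` applies to
  -- `A * house v` with `house v * M * (house v)ᵀ` in place of `M`; hence induction from the right.
  induction l using List.reverseRecOn with
  | nil => left; simp
  | append_singleton l v ih =>
    rcases eq_or_ne v 0 with rfl | hv
    · simpa [house_zero] using ih
    simp only [List.map_append, List.map_cons, List.map_nil, List.prod_append,
      List.prod_singleton]
    set A := (l.map house).prod
    have hassoc : ∀ M, A * house v * M * (A * house v)ᵀ = A * (house v * M * (house v)ᵀ) * Aᵀ := by
      intro M; simp only [transpose_mul, Matrix.mul_assoc]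
    simp only [hassoc, det_mul, det_house hv]
    rcases ih with ⟨hdet, h⟩ | ⟨hdet, h⟩
    · right
      exact ⟨by rw [hdet]; norm_num, fun M => by rw [h, evalMat_house_eq hinv hv he]⟩
    · left
      refine ⟨by rw [hdet]; norm_num, fun M => ?_⟩
      rw [h, evalMat_house_eq hinv he hv, house_transpose]
      congr 1
      calc _ = (house v * house v) * M * (house v * house v) := by
            simp only [Matrix.mul_assoc]
        _ = M := by simp [house_mul_self]

/-- The Cartan–Dieudonné theorem for real orthogonal matrices. -/
lemma exists_prod_house {N : ℕ} {A : Matrix (Fin N) (Fin N) ℝ} (hA : Aᵀ * A = 1) :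
    ∃ l : List (Fin N → ℝ), A = (l.map house).prod := by
  let Φ := toEuclideanCLM (n := Fin N) (𝕜 := ℝ)
  have hAu : A ∈ unitary (Matrix (Fin N) (Fin N) ℝ) :=
    (mem_orthogonalGroup_iff' (Fin N) ℝ).2 hA
  have hΦA : Φ A ∈ unitary (EuclideanSpace ℝ (Fin N) →L[ℝ] EuclideanSpace ℝ (Fin N)) :=
    Unitary.map_mem Φ hAu
  obtain ⟨l, -, hl⟩ := (Unitary.linearIsometryEquiv ⟨Φ A, hΦA⟩).reflections_generate_dim
  have hrefl : ∀ v : EuclideanSpace ℝ (Fin N),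
      Φ (house v.ofLp) = ((Submodule.reflection (ℝ ∙ v)ᗮ : _ ≃ₗᵢ[ℝ] _) :
        EuclideanSpace ℝ (Fin N) →L[ℝ] EuclideanSpace ℝ (Fin N)) := by
    intro v
    ext x i
    have h1 : inner ℝ v x = v.ofLp ⬝ᵥ x.ofLp := by
      simp [PiLp.inner_apply, dotProduct, mul_comm]
    have h2 : ‖v‖ ^ 2 = v.ofLp ⬝ᵥ v.ofLp := by
      rw [EuclideanSpace.real_norm_sq_eq]
      simp [dotProduct, sq]
    simp [Φ, house, Submodule.reflection_orthogonal_apply, Submodule.reflection_singleton_apply,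
      h1, h2, vecMulVec_mulVec]
    ring
  refine ⟨l.map fun v => v.ofLp, Φ.injective ?_⟩
  have key : ∀ l : List (EuclideanSpace ℝ (Fin N)),
      Φ ((l.map fun v => house v.ofLp).prod) =
        (((l.map fun v => Submodule.reflection (ℝ ∙ v)ᗮ).prod : _ ≃ₗᵢ[ℝ] _) :
          EuclideanSpace ℝ (Fin N) →L[ℝ] EuclideanSpace ℝ (Fin N)) := by
    intro l
    induction l with
    | nil => simp
    | cons v l ih =>
      rw [List.map_cons, List.prod_cons, map_mul, ih, hrefl, List.map_cons, List.prod_cons]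
      rfl
  rw [List.map_map]
  refine Eq.trans ?_ (key l).symm
  rw [← hl]
  rfl

/-- A polynomial function on `N × N` real matrices which is infinitesimally invariant
under the action `M ↦ V M + M Vᵀ` of the Lie algebra `o_N` is invariant under the
corresponding action `M ↦ A M Aᵀ` of the group `SO(N)`. -/
theorem infinitesimal_invariance_to_group_invariance (N : ℕ) (hN : 2 ≤ N)
    (P : MvPolynomial (Fin N × Fin N) ℝ)
    (hinv : ∀ V : Matrix (Fin N) (Fin N) ℝ, Vᵀ = -V →
      ∀ M : Matrix (Fin N) (Fin N) ℝ,
        deriv (fun t : ℝ =>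
          MvPolynomial.eval
            (fun p : Fin N × Fin N => (M + t • (V * M + M * Vᵀ)) p.1 p.2) P) 0 = 0) :
    ∀ A : Matrix (Fin N) (Fin N) ℝ, Aᵀ * A = 1 → A.det = 1 →
      ∀ M : Matrix (Fin N) (Fin N) ℝ,
        MvPolynomial.eval (fun p : Fin N × Fin N => (A * M * Aᵀ) p.1 p.2) P =
        MvPolynomial.eval (fun p : Fin N × Fin N => M p.1 p.2) P := by
  intro A hA hdet M
  obtain ⟨l, rfl⟩ := exists_prod_house hA
  have he : (Pi.single ⟨0, by omega⟩ 1 : Fin N → ℝ) ≠ 0 := by simp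
  rcases evalMat_prod_house (P := P) hinv he l with ⟨-, h⟩ | ⟨hneg, -⟩
  · exact h M
  · rw [hneg] at hdet
    norm_num at hdet
end
end
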